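/- Let (S, f) be a Frobenius GNS in ℕ_0^d of type t and let ≺ be any monomial order on ℕ_0^d. Write PF(S) ∖ {f} = {x_1 ≺ x_2 ≺ ⋯ ≺ x_{t−1}}, the elements listed in ≺-increasing order. Then S is almost symmetric if and only if x_i + x_{t−i} = f for every i ∈ {1,…,t−1}. -/

import Mathlib

open scoped BigOperators

/-- A generalized numerical semigroup: a submonoid of `ℕ^d` with finite complement. -/
def IsGNS {d : ℕ} (S : Set (Fin d → ℕ)) : Prop :=
  (0 : Fin d → ℕ) ∈ S ∧ (∀ x y : Fin d → ℕ, x ∈ S → y ∈ S → x + y ∈ S) ∧ Sᶜ.Finite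

/-- The genus: number of gaps. -/
noncomputable def genus {d : ℕ} (S : Set (Fin d → ℕ)) : ℕ := Sᶜ.ncard

/-- Pseudo-Frobenius elements. -/
def PF {d : ℕ} (S : Set (Fin d → ℕ)) : Set (Fin d → ℕ) :=
  {h | h ∉ S ∧ ∀ s ∈ S, s ≠ 0 → h + s ∈ S}

/-- The type: number of pseudo-Frobenius elements. -/
noncomputable def typ {d : ℕ} (S : Set (Fin d → ℕ)) : ℕ := (PF S).ncard

/-- Maximal elements of a set with respect to a relation. -/
def Maximals {α : Type*} (le : α → α → Prop) (X : Set α) : Set α :=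
  {x ∈ X | ∀ y ∈ X, le x y → x = y}

/-- `f` is the unique maximal element of the set of gaps w.r.t. the componentwise order. -/
def IsFrobenius {d : ℕ} (S : Set (Fin d → ℕ)) (f : Fin d → ℕ) : Prop :=
  Maximals (· ≤ ·) Sᶜ = {f}

/-- Almost symmetric: `2 g(S) + 1 - t(S) = ∏ (h i + 1)` for some gap `h`. -/
def AlmostSymmetric {d : ℕ} (S : Set (Fin d → ℕ)) : Prop :=
  ∃ h ∉ S, 2 * genus S + 1 = typ S + ∏ i, (h i + 1)

/-- Special gaps. -/
def SG {d : ℕ} (S : Set (Fin d → ℕ)) : Set (Fin d → ℕ) :=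
  {h ∈ PF S | h + h ∈ S}

/-- The partial order `≤_S` : `y ≤_S x` iff `x - y ∈ S`. -/
def leS {d : ℕ} (S : Set (Fin d → ℕ)) (x y : Fin d → ℕ) : Prop :=
  ∃ s ∈ S, x + s = y

/-- The Apéry set of `S` with respect to `n`. -/
def Ap {d : ℕ} (S : Set (Fin d → ℕ)) (n : Fin d → ℕ) : Set (Fin d → ℕ) :=
  {s ∈ S | ¬ ∃ u ∈ S, u + n = s}

/-- The reduced Apéry set of `S` with respect to `n`. -/
def Cred {d : ℕ} (S : Set (Fin d → ℕ)) (n : Fin d → ℕ) : Set (Fin d → ℕ) :=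
  {s ∈ Ap S n | ∃ h, h ∉ S ∧ s ≤ h + n}

/-- A monomial order on `ℕ^d` given by its strict-order relation. -/
def IsMonomialOrder (d : ℕ) (lt : (Fin d → ℕ) → (Fin d → ℕ) → Prop) : Prop :=
  (∀ a, ¬ lt a a) ∧ (∀ a b c, lt a b → lt b c → lt a c) ∧
  (∀ a b, a ≠ b → lt a b ∨ lt b a) ∧
  (∀ u a b, lt a b → lt (a + u) (b + u)) ∧
  (∀ a, a ≠ (0 : Fin d → ℕ) → lt 0 a)

/-- Minimal generator of a GNS. -/
def IsMinGen {d : ℕ} (S : Set (Fin d → ℕ)) (x : Fin d → ℕ) : Prop :=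
  x ∈ S ∧ x ≠ 0 ∧ ∀ y ∈ S, ∀ z ∈ S, y ≠ 0 → z ≠ 0 → y + z ≠ x

/-- Irreducible GNS: not an intersection of two GNSs properly containing it. -/
def GNSIrreducible {d : ℕ} (S : Set (Fin d → ℕ)) : Prop :=
  ¬ ∃ S₁ S₂ : Set (Fin d → ℕ), IsGNS S₁ ∧ IsGNS S₂ ∧ S ⊂ S₁ ∧ S ⊂ S₂ ∧ S = S₁ ∩ S₂

/-- Pseudo-symmetric: `PF S = {f, f/2}`. -/
def PseudoSymmetric {d : ℕ} (S : Set (Fin d → ℕ)) : Prop :=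
  ∃ f q : Fin d → ℕ, f ≠ q ∧ q + q = f ∧ PF S = {f, q}

/-- All gaps lie below the Frobenius element, which is itself a gap. -/
lemma aux_frob {d : ℕ} {S : Set (Fin d → ℕ)} (hS : IsGNS S)
    {f : Fin d → ℕ} (hf : IsFrobenius S f) : f ∉ S ∧ ∀ h, h ∉ S → h ≤ f := by
  have hff : f ∈ Maximals (· ≤ ·) Sᶜ := by rw [hf]; rfl
  refine ⟨hff.1, fun h hh => ?_⟩
  obtain ⟨m, hm, hmax⟩ := hS.2.2.exists_le_maximal (a := h) hh
  have : m ∈ Maximals (· ≤ ·) Sᶜ :=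
    ⟨hmax.1, fun y hy hmy => le_antisymm hmy (hmax.2 hy hmy)⟩
  rw [hf] at this
  rw [← Set.mem_singleton_iff.1 this]
  exact hm

/-- Every gap is below a pseudo-Frobenius element in the order `≤_S`. -/
lemma aux_pf {d : ℕ} {S : Set (Fin d → ℕ)} (hS : IsGNS S) (h : Fin d → ℕ) (hh : h ∉ S) :
    ∃ s ∈ S, h + s ∈ PF S := by
  have hfin : (Sᶜ ∩ {p | ∃ s ∈ S, h + s = p}).Finite := hS.2.2.subset Set.inter_subset_left
  obtain ⟨m, _, hmax⟩ := hfin.exists_le_maximal (a := h) ⟨hh, 0, hS.1, by simp⟩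
  obtain ⟨⟨hm, s, hs, rfl⟩, hmx⟩ := hmax
  refine ⟨s, hs, hm, fun u hu hu0 => ?_⟩
  by_contra hc
  have h1 := hmx (y := h + s + u) ⟨hc, s + u, hS.2.1 _ _ hs hu, by rw [add_assoc]⟩ le_self_add
  apply hu0
  funext i
  have := h1 i
  simp only [Pi.add_apply, Pi.zero_apply] at this ⊢
  omega

lemma aux_sub {d : ℕ} {h f : Fin d → ℕ} (hle : h ≤ f) : h + (f - h) = f :=
  add_tsub_cancel_of_le hle

lemma aux_pf_f {d : ℕ} {S : Set (Fin d → ℕ)} (hS : IsGNS S)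
    {f : Fin d → ℕ} (hf : IsFrobenius S f) : f ∈ PF S := by
  obtain ⟨hfS, hle⟩ := aux_frob hS hf
  refine ⟨hfS, fun s _ hs0 => ?_⟩
  by_contra hc
  have h1 := hle _ hc
  apply hs0
  funext i
  have := h1 i
  simp only [Pi.add_apply, Pi.zero_apply] at this ⊢
  omega

/-- Gaps `h` with `f - h` a gap. -/
def LL {d : ℕ} (S : Set (Fin d → ℕ)) (f : Fin d → ℕ) : Set (Fin d → ℕ) :=
  {h | h ∉ S ∧ f - h ∉ S}

lemma aux_pf_sub {d : ℕ} {S : Set (Fin d → ℕ)} (hS : IsGNS S)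
    {f : Fin d → ℕ} (hf : IsFrobenius S f) : PF S \ {f} ⊆ LL S f := by
  obtain ⟨hfS, hle⟩ := aux_frob hS hf
  rintro h ⟨⟨hh, hp⟩, hne⟩
  refine ⟨hh, fun hc => ?_⟩
  have e := aux_sub (hle h hh)
  by_cases h0 : f - h = 0
  · rw [h0, add_zero] at e
    exact hne e
  · have := hp _ hc h0
    rw [e] at this
    exact hfS this

lemma aux_count {d : ℕ} {S : Set (Fin d → ℕ)} (hS : IsGNS S)
    {f : Fin d → ℕ} (hf : IsFrobenius S f) :
    2 * genus S = ∏ i, (f i + 1) + (LL S f).ncard := by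
  classical
  obtain ⟨hfS, hle⟩ := aux_frob hS hf
  have hB : (Finset.Iic f).card = ∏ i, (f i + 1) := by
    simp [Pi.card_Iic]
  have hG : genus S = ((Finset.Iic f).filter (fun h => h ∉ S)).card := by
    rw [genus, ← Set.ncard_coe_finset]
    congr 1
    ext h
    simpa using hle h
  have hL : (LL S f).ncard =
      (((Finset.Iic f).filter (fun h => h ∉ S)).filter (fun h => f - h ∉ S)).card := by
    rw [← Set.ncard_coe_finset]
    congr 1
    ext h
    simp only [LL, Set.mem_setOf_eq, Finset.coe_filter, Finset.mem_filter, Finset.mem_Iic]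
    have := hle h
    tauto
  have hN : ((Finset.Iic f).filter (fun h => h ∈ S)).card =
      (((Finset.Iic f).filter (fun h => h ∉ S)).filter (fun h => ¬ (f - h ∉ S))).card := by
    refine Finset.card_bij' (fun h _ => f - h) (fun h _ => f - h) ?_ ?_ ?_ ?_
    · intro h hh
      simp only [Finset.mem_filter, Finset.mem_Iic, not_not] at hh ⊢
      refine ⟨⟨tsub_le_self, fun hc => ?_⟩, ?_⟩
      · have := hS.2.1 _ _ hh.2 hc
        rw [aux_sub hh.1] at this
        exact hfS this
      · rw [tsub_tsub_cancel_of_le hh.1]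
        exact hh.2
    · intro h hh
      simp only [Finset.mem_filter, Finset.mem_Iic, not_not] at hh ⊢
      exact ⟨tsub_le_self, hh.2⟩
    · intro h hh
      simp only [Finset.mem_filter, Finset.mem_Iic] at hh
      exact tsub_tsub_cancel_of_le hh.1
    · intro h hh
      simp only [Finset.mem_filter, Finset.mem_Iic] at hh
      exact tsub_tsub_cancel_of_le hh.1.1
  have e1 := Finset.card_filter_add_card_filter_not (s := Finset.Iic f) (fun h => h ∈ S)
  have e2 := Finset.card_filter_add_card_filter_not
    (s := (Finset.Iic f).filter (fun h => h ∉ S)) (fun h => f - h ∉ S)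
  omega

lemma aux_as {d : ℕ} {S : Set (Fin d → ℕ)} (hS : IsGNS S)
    {f : Fin d → ℕ} (hf : IsFrobenius S f) :
    AlmostSymmetric S ↔ LL S f ⊆ PF S \ {f} := by
  obtain ⟨hfS, hle⟩ := aux_frob hS hf
  have hc := aux_count hS hf
  have hLfin : (LL S f).Finite := hS.2.2.subset fun h hh => hh.1
  have hPfin : (PF S).Finite := hS.2.2.subset fun h hh => hh.1
  have hsub := aux_pf_sub hS hf
  have hcard := Set.ncard_le_ncard hsub hLfin
  have ht : (PF S \ {f}).ncard + 1 = typ S :=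
    Set.ncard_diff_singleton_add_one (aux_pf_f hS hf) hPfin
  constructor
  · rintro ⟨h, hh, he⟩
    have hprod : ∏ i, (h i + 1) ≤ ∏ i, (f i + 1) :=
      Finset.prod_le_prod' fun i _ => Nat.succ_le_succ (hle h hh i)
    exact (Set.eq_of_subset_of_ncard_le hsub (by omega) hLfin).ge
  · intro hs
    have := Set.ncard_le_ncard hs (hPfin.subset Set.diff_subset)
    exact ⟨f, hfS, by omega⟩

/-- A strictly decreasing self-map of `{1,…,n}` is the reversal. -/
lemma aux_anti (n : ℕ) (σ : ℕ → ℕ) (h1 : ∀ i, 1 ≤ i → i ≤ n → 1 ≤ σ i ∧ σ i ≤ n)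
    (h2 : ∀ i j, 1 ≤ i → i < j → j ≤ n → σ j < σ i) (i : ℕ) (hi : 1 ≤ i) (hin : i ≤ n) :
    σ i = n + 1 - i := by
  have up : ∀ k, 1 ≤ k → k ≤ n → σ k + k ≤ n + 1 := by
    intro k hk
    induction k, hk using Nat.le_induction with
    | base => intro hn; have := h1 1 le_rfl hn; omega
    | succ k hk ih =>
      intro hn
      have := ih (by omega)
      have := h2 k (k + 1) hk (by omega) hn
      omega
  have lo : ∀ k, k < n → n + 1 ≤ σ (n - k) + (n - k) := by
    intro k
    induction k with
    | zero => intro hn; have := h1 n hn le_rfl; simp only [Nat.sub_zero]; omega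
    | succ k ih =>
      intro hn
      have a := ih (by omega)
      have b := h2 (n - (k + 1)) (n - k) (by omega) (by omega) (by omega)
      omega
  have a := up i hi hin
  have b := lo (n - i) (by omega)
  rw [show n - (n - i) = i by omega] at b
  omega

/-- For a Frobenius GNS `(S, f)` of type `t`, a monomial order `≺` and
`PF(S) ∖ {f} = {x_1 ≺ ⋯ ≺ x_{t-1}}`, `S` is almost symmetric iff
`x_i + x_{t-i} = f` for all `i ∈ {1,…,t-1}`. -/
theorem statement8 (d : ℕ) (hd : 0 < d) (S : Set (Fin d → ℕ)) (hS : IsGNS S)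
    (f : Fin d → ℕ) (hf : IsFrobenius S f)
    (lt : (Fin d → ℕ) → (Fin d → ℕ) → Prop) (hlt : IsMonomialOrder d lt)
    (t : ℕ) (ht : typ S = t)
    (x : ℕ → (Fin d → ℕ))
    (hinc : ∀ i j, 1 ≤ i → i < j → j ≤ t - 1 → lt (x i) (x j))
    (henum : PF S \ {f} = x '' Set.Icc 1 (t - 1)) :
    AlmostSymmetric S ↔ ∀ i, 1 ≤ i → i ≤ t - 1 → x i + x (t - i) = f := by
  rw [aux_as hS hf]
  obtain ⟨hfS, hle⟩ := aux_frob hS hf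
  have hsub := aux_pf_sub hS hf
  obtain ⟨hirr, htr, htot, hadd, hpos⟩ := hlt
  have hmem : ∀ i, 1 ≤ i → i ≤ t - 1 → x i ∈ PF S \ {f} := fun i h1 h2 => by
    rw [henum]; exact ⟨i, ⟨h1, h2⟩, rfl⟩
  constructor
  · intro hL
    have key : ∀ i, ∃ j, 1 ≤ i → i ≤ t - 1 → (1 ≤ j ∧ j ≤ t - 1) ∧ x i + x j = f := by
      intro i
      by_cases hi : 1 ≤ i ∧ i ≤ t - 1
      · have hx := hsub (hmem i hi.1 hi.2)
        have hxle := hle _ hx.1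
        have hy : f - x i ∈ LL S f := ⟨hx.2, by rw [tsub_tsub_cancel_of_le hxle]; exact hx.1⟩
        have hy2 := hL hy
        rw [henum] at hy2
        obtain ⟨j, hj, hxj⟩ := hy2
        exact ⟨j, fun _ _ => ⟨hj, by rw [hxj]; exact aux_sub hxle⟩⟩
      · exact ⟨0, fun a b => absurd ⟨a, b⟩ hi⟩
    choose σ hσ using key
    have hanti : ∀ i j, 1 ≤ i → i < j → j ≤ t - 1 → σ j < σ i := by
      intro i j h1 hij hj
      obtain ⟨⟨a1, a2⟩, ea⟩ := hσ i h1 (by omega)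
      obtain ⟨⟨b1, b2⟩, eb⟩ := hσ j (by omega) hj
      have hl := hinc i j h1 hij hj
      have hl2 := hadd (x (σ i)) _ _ hl
      by_contra hc
      rcases Nat.lt_or_eq_of_le (not_lt.1 hc) with hc | hc
      · have h3 := hadd (x j) _ _ (hinc _ _ a1 hc b2)
        rw [add_comm _ (x j), add_comm _ (x j)] at h3
        have h4 := htr _ _ _ hl2 h3
        rw [ea, eb] at h4
        exact hirr _ h4
      · rw [ea, hc, eb] at hl2
        exact hirr _ hl2
    intro i h1 h2
    have e := aux_anti (t - 1) σ (fun i a b => (hσ i a b).1) hanti i h1 h2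
    have e2 := (hσ i h1 h2).2
    rw [e, show t - 1 + 1 - i = t - i by omega] at e2
    exact e2
  · intro hx h hh
    obtain ⟨s, hs, hp⟩ := aux_pf hS h hh.1
    have hhle := aux_sub (hle h hh.1)
    have hpf : h + s ≠ f := by
      intro e
      apply hh.2
      have : f - h = s := by rw [← e]; exact add_tsub_cancel_left h s
      rwa [this]
    have hp2 : h + s ∈ PF S \ {f} := ⟨hp, hpf⟩
    by_cases hs0 : s = 0
    · rwa [hs0, add_zero] at hp2
    · exfalso
      have hp3 := hp2
      rw [henum] at hp3
      obtain ⟨i, ⟨h1, h2⟩, hi⟩ := hp3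
      have e := hx i h1 h2
      have hq := (hmem (t - i) (by omega) (by omega)).1.2 s hs hs0
      apply hh.2
      have : f - h = x (t - i) + s := by
        rw [← e, hi, add_assoc, add_tsub_cancel_left, add_comm]
      rwa [this]
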